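/- Let β ∈ (0,2], n ∈ ℕ, define φ₁(λ) = log(1 + λ^{β/2}) and φ_{k+1} = φ₁ ∘ φ_k, and let μ_n : (0,∞) → (0,∞) be a decreasing function with φ_n(λ) = ∫_0^∞ (1 − e^{−λt}) μ_n(t) dt for all λ > 0. For an integer d ≥ 3, define j_n(r) = ∫_0^∞ (4πt)^{−d/2} e^{−r²/(4t)} μ_n(t) dt. Then j_n(r) ≍ r^{−d} · ∏_{k=1}^{n−1} (log_k(1/r))^{−1} as r → 0+ (the product being 1 when n = 1). -/

import Mathlib

open MeasureTheory Set Filter Topology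

/-- Iterated geometric stable Laplace exponents: `phiIter β 1 λ = log(1 + λ^{β/2})` and
`phiIter β (n+1) = phiIter β 1 ∘ phiIter β n`. -/
noncomputable def phiIter (β : ℝ) : ℕ → ℝ → ℝ
  | 0, l => l
  | n + 1, l => Real.log (1 + phiIter β n l ^ (β / 2))

/-- Iterated logarithms: `iterLog 1 = log`, `iterLog (k+1) = log ∘ iterLog k`. -/
noncomputable def iterLog : ℕ → ℝ → ℝ
  | 0, x => x
  | n + 1, x => Real.log (iterLog n x)

open Asymptotics

/-!
The doubling increment of a Laplace exponent with Lévy density `μ` is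
`φ (2λ) - φ λ = ∫ e^{-λt} (1 - e^{-λt}) μ t dt`, whose kernel is concentrated near `t = 1 / λ`. For
nonincreasing `μ` it is therefore comparable to `μ (1 / λ) / λ`, provided that it varies slowly.
From `φ_{n+1} = log (1 + φ_n ^ (β / 2))` one gets, by induction, that
`φ_n (2λ) - φ_n λ ≍ (∏_{1 ≤ k < n} log_k λ)⁻¹`, since each further logarithm divides the increment
by `φ_n λ ≍ log_n λ`. Hence `t μ_n t ≍ (∏_{1 ≤ k < n} log_k (1 / t))⁻¹` as `t → 0+`.

Substituting `t = r² s` in the Gaussian integral extracts the factor `r^{-d}`. The window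
`1 < s ≤ 2` yields the lower bound, and Potter's bound for the product of logarithms gives an
integrable majorant in `s`. Finally `log_k (r⁻²) ≍ log_k (r⁻¹)`.
-/

theorem isTheta_iff_exists_mul_le {α : Type*} {l : Filter α} {f g : α → ℝ}
    (hf : 0 ≤ᶠ[l] f) (hg : 0 ≤ᶠ[l] g) :
    f =Θ[l] g ↔ ∃ c C : ℝ, 0 < c ∧ 0 < C ∧ ∀ᶠ x in l, c * g x ≤ f x ∧ f x ≤ C * g x := by
  constructor
  · rintro ⟨hfg, hgf⟩
    obtain ⟨C, hC, hfC⟩ := hfg.exists_pos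
    obtain ⟨c, hc, hgc⟩ := hgf.exists_pos
    refine ⟨c⁻¹, C, inv_pos.2 hc, hC, ?_⟩
    filter_upwards [hf, hg, hfC.bound, hgc.bound] with x hfx hgx hle hge
    rw [Real.norm_of_nonneg hfx, Real.norm_of_nonneg hgx] at hle hge
    exact ⟨(inv_mul_le_iff₀ hc).2 hge, hle⟩
  · rintro ⟨c, C, hc, -, h⟩
    refine ⟨.of_bound C ?_, .of_bound c⁻¹ ?_⟩ <;> filter_upwards [hf, hg, h] with x hfx hgx hx <;>
      rw [Real.norm_of_nonneg hfx, Real.norm_of_nonneg hgx]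
    exacts [hx.2, (le_inv_mul_iff₀ hc).2 hx.1]

theorem isTheta_log {α : Type*} {l : Filter α} {f g : α → ℝ} (h : f =Θ[l] g)
    (hg : Tendsto g l atTop) :
    (fun x ↦ Real.log (f x)) =Θ[l] fun x ↦ Real.log (g x) := by
  suffices hO : (fun x ↦ Real.log (f x) - Real.log (g x)) =O[l] fun _ ↦ (1 : ℝ) by
    have hlog : (fun _ ↦ (1 : ℝ)) =o[l] fun x ↦ Real.log (g x) :=
      isLittleO_const_left.2 <| .inr <| tendsto_norm_atTop_atTop.comp <|
        Real.tendsto_log_atTop.comp hg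
    exact IsEquivalent.isTheta (hO.trans_isLittleO hlog)
  obtain ⟨C, hC, hfC⟩ := h.1.exists_pos
  obtain ⟨c, hc, hgc⟩ := h.2.exists_pos
  refine .of_bound (max (Real.log C) (Real.log c)) ?_
  filter_upwards [hfC.bound, hgc.bound, hg.eventually_gt_atTop 0] with x hle hge hgx
  have hgx' : 0 < ‖g x‖ := norm_pos_iff.2 hgx.ne'
  have hfx' : 0 < ‖f x‖ := pos_of_mul_pos_right (hgx'.trans_le hge) hc.le
  have hle' := Real.log_le_log hfx' hle
  have hge' := Real.log_le_log hgx' hge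
  rw [Real.log_mul (by positivity) (by positivity)] at hle' hge'
  simp only [Real.norm_eq_abs, Real.log_abs] at hle' hge'
  rw [norm_one, mul_one, Real.norm_eq_abs, abs_sub_le_iff]
  exact ⟨le_max_of_le_left (by linarith), le_max_of_le_right (by linarith)⟩

/-! ### Potter bounds -/

/-- Potter's bound of exponent `δ`: the one-sided growth estimate characteristic of functions of
upper index at most `δ`. Slow variation of a nondecreasing function means that it holds for every
`δ > 0`. -/
def PotterBound (δ : ℝ) (f : ℝ → ℝ) : Prop :=
  ∀ᶠ x in atTop, ∀ y, x ≤ y → f y ≤ (y / x) ^ δ * f x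

theorem PotterBound.log {K : ℝ} {f : ℝ → ℝ} (h : PotterBound K f) (hf : Tendsto f atTop atTop)
    {δ : ℝ} (hδ : 0 < δ) : PotterBound δ fun x ↦ Real.log (f x) := by
  filter_upwards [h, eventually_forall_ge_atTop.2 (hf.eventually_gt_atTop 0), eventually_gt_atTop 0,
    (Real.tendsto_log_atTop.comp hf).eventually_ge_atTop (max 0 (K / δ))]
    with x hx hpos hx0 hlog y hxy
  have hfx := hpos x le_rfl
  have hfy := hpos y hxy
  have hyx : 0 < y / x := div_pos (hx0.trans_le hxy) hx0
  have hu : 0 ≤ Real.log (y / x) := Real.log_nonneg ((one_le_div hx0).2 hxy)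
  obtain ⟨hlog0, hK⟩ := max_le_iff.1 hlog
  rw [Function.comp_apply] at hlog0 hK
  calc Real.log (f y) ≤ Real.log ((y / x) ^ K * f x) := Real.log_le_log hfy (hx y hxy)
    _ = K * Real.log (y / x) + Real.log (f x) := by
      rw [Real.log_mul (by positivity) hfx.ne', Real.log_rpow hyx]
    _ ≤ Real.log (f x) * δ * Real.log (y / x) + Real.log (f x) := by
      gcongr
      exact (div_le_iff₀ hδ).1 hK
    _ = (Real.log (y / x) * δ + 1) * Real.log (f x) := by ring
    _ ≤ (y / x) ^ δ * Real.log (f x) := by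
      rw [Real.rpow_def_of_pos hyx]
      gcongr
      exact Real.add_one_le_exp _

theorem PotterBound.mul {δ ε : ℝ} {f g : ℝ → ℝ} (hf : PotterBound δ f) (hg : PotterBound ε g)
    (hf0 : ∀ᶠ x in atTop, 0 ≤ f x) (hg0 : ∀ᶠ x in atTop, 0 ≤ g x) :
    PotterBound (δ + ε) fun x ↦ f x * g x := by
  filter_upwards [hf, hg, hf0, eventually_forall_ge_atTop.2 hg0, eventually_gt_atTop 0]
    with x hfx hgx hfx0 hg0 hx0 y hxy
  have hyx : 0 < y / x := div_pos (hx0.trans_le hxy) hx0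
  calc f y * g y ≤ ((y / x) ^ δ * f x) * ((y / x) ^ ε * g x) :=
        mul_le_mul (hfx y hxy) (hgx y hxy) (hg0 y hxy) (by positivity)
    _ = (y / x) ^ (δ + ε) * (f x * g x) := by rw [Real.rpow_add hyx]; ring

theorem PotterBound.isBigO_rpow {δ : ℝ} {f : ℝ → ℝ} (h : PotterBound δ f)
    (hf0 : ∀ᶠ x in atTop, 0 ≤ f x) : f =O[atTop] fun x ↦ x ^ δ := by
  obtain ⟨B, hB, hBpos⟩ := (h.and (eventually_gt_atTop 0)).exists
  refine .of_bound (B ^ (-δ) * f B) ?_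
  filter_upwards [eventually_ge_atTop B, hf0] with x hx hfx
  have hx0 : 0 < x := hBpos.trans_le hx
  rw [Real.norm_of_nonneg hfx, Real.norm_of_nonneg (by positivity)]
  refine (hB x hx).trans_eq ?_
  rw [Real.div_rpow hx0.le hBpos.le, Real.rpow_neg hBpos.le]
  ring

theorem PotterBound.le_one_add_mul {δ : ℝ} {f : ℝ → ℝ} (h : PotterBound δ f)
    (hf0 : ∀ᶠ x in atTop, 0 ≤ f x) (hf : ∀ᶠ B in atTop, MonotoneOn f (Ici B)) :
    ∀ᶠ B in atTop, ∀ x y, B ≤ x → B ≤ y → f x ≤ (1 + (x / y) ^ δ) * f y := by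
  filter_upwards [eventually_forall_ge_atTop.2 h, eventually_forall_ge_atTop.2 hf0, hf,
    eventually_gt_atTop 0] with B hB hB0 hmono hBpos x y hx hy
  have hfy := hB0 y hy
  have hxy : 0 < x / y := div_pos (hBpos.trans_le hx) (hBpos.trans_le hy)
  have hpow : 0 ≤ (x / y) ^ δ := Real.rpow_nonneg hxy.le _
  rcases le_total x y with hle | hle
  · nlinarith [hmono hx hy hle]
  · nlinarith [hB y hy x hle]

/-! ### Iterated logarithms -/

theorem tendsto_iterLog_atTop (n : ℕ) : Tendsto (iterLog n) atTop atTop := by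
  induction n with
  | zero => exact tendsto_id
  | succ n ih => exact Real.tendsto_log_atTop.comp ih

theorem eventually_monotoneOn_iterLog (n : ℕ) : ∀ᶠ B in atTop, MonotoneOn (iterLog n) (Ici B) := by
  induction n with
  | zero => exact .of_forall fun _ ↦ monotoneOn_id
  | succ n ih =>
    filter_upwards [ih, eventually_forall_ge_atTop.2 <|
      (tendsto_iterLog_atTop n).eventually_gt_atTop 0] with B hmono hpos x hx y hy hxy
    exact Real.log_le_log (hpos x hx) (hmono hx hy hxy)

theorem iterLog_succ_eq_iterLog_log (n : ℕ) (x : ℝ) :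
    iterLog (n + 1) x = iterLog n (Real.log x) := by
  induction n with
  | zero => rfl
  | succ n ih => exact congrArg Real.log ih

theorem isTheta_iterLog_comp {α : Type*} {l : Filter α} {f g : α → ℝ} (h : f =Θ[l] g)
    (hg : Tendsto g l atTop) (n : ℕ) : (iterLog n ∘ f) =Θ[l] (iterLog n ∘ g) := by
  induction n with
  | zero => exact h
  | succ n ih => exact isTheta_log ih ((tendsto_iterLog_atTop n).comp hg)

theorem isTheta_iterLog_succ_sq (n : ℕ) :
    (fun x ↦ iterLog (n + 1) (x ^ 2)) =Θ[atTop] iterLog (n + 1) := by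
  have hlog : (fun x ↦ Real.log (x ^ 2)) =Θ[atTop] Real.log := by
    simp only [Real.log_pow]
    exact (isTheta_const_mul_left (by norm_num)).2 isTheta_rfl
  simpa only [Function.comp_def, ← iterLog_succ_eq_iterLog_log]
    using isTheta_iterLog_comp hlog Real.tendsto_log_atTop n

theorem potterBound_iterLog_succ (n : ℕ) {δ : ℝ} (hδ : 0 < δ) :
    PotterBound δ (iterLog (n + 1)) := by
  induction n generalizing δ with
  | zero =>
    have hid : PotterBound 1 (iterLog 0) := by
      filter_upwards [eventually_gt_atTop 0] with x hx y _
      simp [iterLog, div_mul_cancel₀ _ hx.ne']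
    exact hid.log (tendsto_iterLog_atTop 0) hδ
  | succ n ih => exact (ih one_pos).log (tendsto_iterLog_atTop (n + 1)) hδ

/-- The product `∏_{k=1}^n log_k x` of the first `n` iterated logarithms. -/
noncomputable def iterLogProd (n : ℕ) (x : ℝ) : ℝ := ∏ k ∈ Finset.Icc 1 n, iterLog k x

theorem iterLogProd_zero (x : ℝ) : iterLogProd 0 x = 1 := by simp [iterLogProd]

theorem iterLogProd_succ (n : ℕ) (x : ℝ) :
    iterLogProd (n + 1) x = iterLogProd n x * iterLog (n + 1) x :=
  Finset.prod_Icc_succ_top (by lia) _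

theorem eventually_iterLogProd_pos (n : ℕ) : ∀ᶠ x in atTop, 0 < iterLogProd n x := by
  have h : ∀ᶠ x in atTop, ∀ k ∈ Finset.Icc 1 n, 0 < iterLog k x :=
    (Finset.eventually_all _).2 fun k _ ↦ (tendsto_iterLog_atTop k).eventually_gt_atTop 0
  exact h.mono fun _ ↦ Finset.prod_pos

theorem eventually_monotoneOn_iterLogProd (n : ℕ) :
    ∀ᶠ B in atTop, MonotoneOn (iterLogProd n) (Ici B) := by
  have h : ∀ᶠ B in atTop, ∀ k ∈ Finset.Icc 1 n,
      (∀ x, B ≤ x → 0 < iterLog k x) ∧ MonotoneOn (iterLog k) (Ici B) :=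
    (Finset.eventually_all _).2 fun k _ ↦
      (eventually_forall_ge_atTop.2 <| (tendsto_iterLog_atTop k).eventually_gt_atTop 0).and
        (eventually_monotoneOn_iterLog k)
  filter_upwards [h] with B hB x hx y hy hxy
  exact Finset.prod_le_prod (fun k hk ↦ ((hB k hk).1 x hx).le) fun k hk ↦ (hB k hk).2 hx hy hxy

theorem isTheta_iterLogProd_sq (n : ℕ) :
    (fun x ↦ iterLogProd n (x ^ 2)) =Θ[atTop] iterLogProd n := by
  refine IsTheta.finsetProd fun k hk ↦ ?_
  obtain ⟨m, rfl⟩ := Nat.exists_eq_add_of_le' (Finset.mem_Icc.1 hk).1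
  exact isTheta_iterLog_succ_sq m

theorem potterBound_iterLogProd (n : ℕ) {δ : ℝ} (hδ : 0 < δ) : PotterBound δ (iterLogProd n) := by
  induction n generalizing δ with
  | zero =>
    filter_upwards [eventually_gt_atTop 0] with x hx y hxy
    simpa [iterLogProd] using Real.one_le_rpow ((one_le_div hx).2 hxy) hδ.le
  | succ n ih =>
    have h := (ih (half_pos hδ)).mul (potterBound_iterLog_succ n (half_pos hδ))
      ((eventually_iterLogProd_pos n).mono fun _ ↦ le_of_lt)
      ((tendsto_iterLog_atTop (n + 1)).eventually_ge_atTop 0)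
    rw [add_halves] at h
    simpa only [← iterLogProd_succ] using h

/-! ### Doubling increments of the Laplace exponents -/

theorem isTheta_log_one_add_rpow {q : ℝ} (hq : 0 < q) :
    (fun x : ℝ ↦ Real.log (1 + x ^ q)) =Θ[atTop] Real.log := by
  have hpow : Tendsto (fun x : ℝ ↦ x ^ q) atTop atTop := tendsto_rpow_atTop hq
  have hadd : (fun x : ℝ ↦ 1 + x ^ q) =Θ[atTop] fun x ↦ x ^ q :=
    (isLittleO_const_left.2 <| .inr <| tendsto_norm_atTop_atTop.comp hpow).add_isTheta isTheta_rfl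
  have hlog : (fun x : ℝ ↦ Real.log (x ^ q)) =ᶠ[atTop] fun x ↦ q * Real.log x := by
    filter_upwards [eventually_gt_atTop 0] with x hx using Real.log_rpow hx q
  exact (isTheta_log hadd hpow).trans <| hlog.trans_isTheta <|
    (isTheta_const_mul_left hq.ne').2 isTheta_rfl

theorem log_one_add_rpow_sub_le {q a b : ℝ} (hq : 0 < q) (ha : 0 < a) (hab : a ≤ b) :
    Real.log (1 + b ^ q) - Real.log (1 + a ^ q) ≤ q * ((b - a) / a) := by
  have hb : 0 < b := ha.trans_le hab
  have hpow : a ^ q ≤ b ^ q := Real.rpow_le_rpow ha.le hab hq.le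
  have ha' : 0 < a ^ q := Real.rpow_pos_of_pos ha q
  have hmul : (1 + b ^ q) * a ^ q ≤ (1 + a ^ q) * b ^ q := by linarith
  have hlog := Real.log_le_log (by positivity) hmul
  rw [Real.log_mul (by positivity) ha'.ne', Real.log_mul (by positivity) (by positivity),
    Real.log_rpow ha, Real.log_rpow hb] at hlog
  calc Real.log (1 + b ^ q) - Real.log (1 + a ^ q) ≤ q * (Real.log b - Real.log a) := by linarith
    _ = q * Real.log (b / a) := by rw [Real.log_div hb.ne' ha.ne']
    _ ≤ q * (b / a - 1) := by gcongr; exact Real.log_le_sub_one_of_pos (by positivity)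
    _ = q * ((b - a) / a) := by field_simp

theorem le_log_one_add_rpow_sub {q a b : ℝ} (hq : 0 < q) (ha : 1 ≤ a) (hab : a ≤ b) :
    q / 2 * ((b - a) / b) ≤ Real.log (1 + b ^ q) - Real.log (1 + a ^ q) := by
  have ha0 : 0 < a := by linarith
  have hb0 : 0 < b := by linarith
  have hpow : a ^ q ≤ b ^ q := Real.rpow_le_rpow ha0.le hab hq.le
  have ha' : 1 ≤ a ^ q := Real.one_le_rpow ha hq.le
  have hb' : 1 ≤ b ^ q := ha'.trans hpow
  -- With `u = a ^ q` and `v = b ^ q`, the difference of the two sides is `(u * v - 1) * (v - u)`.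
  have hmul : (1 + a ^ q) ^ 2 * b ^ q ≤ (1 + b ^ q) ^ 2 * a ^ q := by
    nlinarith [mul_nonneg (sub_nonneg.2 (one_le_mul_of_one_le_of_one_le ha' hb'))
      (sub_nonneg.2 hpow)]
  have hlog := Real.log_le_log (by positivity) hmul
  rw [Real.log_mul (by positivity) (by positivity), Real.log_mul (by positivity) (by positivity),
    Real.log_pow, Real.log_pow, Real.log_rpow ha0, Real.log_rpow hb0] at hlog
  push_cast at hlog
  calc q / 2 * ((b - a) / b) = q / 2 * (1 - (b / a)⁻¹) := by field_simp
    _ ≤ q / 2 * Real.log (b / a) := by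
      gcongr; exact Real.one_sub_inv_le_log_of_pos (by positivity)
    _ = q / 2 * (Real.log b - Real.log a) := by rw [Real.log_div hb0.ne' ha0.ne']
    _ ≤ Real.log (1 + b ^ q) - Real.log (1 + a ^ q) := by linarith

section phiIter

variable {β : ℝ}

theorem phiIter_pos (n : ℕ) {l : ℝ} (hl : 0 < l) : 0 < phiIter β n l := by
  induction n with
  | zero => exact hl
  | succ n ih => exact Real.log_pos (lt_add_of_pos_right 1 (Real.rpow_pos_of_pos ih _))

theorem monotoneOn_phiIter (hβ : 0 ≤ β) (n : ℕ) : MonotoneOn (phiIter β n) (Ioi 0) := by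
  induction n with
  | zero => exact monotoneOn_id
  | succ n ih =>
    intro x hx y hy hxy
    have hφx := phiIter_pos (β := β) n hx
    exact Real.log_le_log (by positivity) <| add_le_add_right
      (Real.rpow_le_rpow hφx.le (ih hx hy hxy) (by positivity)) 1

theorem tendsto_phiIter_atTop (hβ : 0 < β) (n : ℕ) : Tendsto (phiIter β n) atTop atTop := by
  induction n with
  | zero => exact tendsto_id
  | succ n ih =>
    exact Real.tendsto_log_atTop.comp <| tendsto_atTop_add_const_left _ _ <|
      (tendsto_rpow_atTop (half_pos hβ)).comp ih

theorem isTheta_phiIter_iterLog (hβ : 0 < β) (n : ℕ) : phiIter β n =Θ[atTop] iterLog n := by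
  induction n with
  | zero => exact isTheta_rfl
  | succ n ih =>
    have hφ := tendsto_phiIter_atTop hβ n
    have hstep := isTheta_log_one_add_rpow (half_pos hβ)
    exact IsTheta.trans ⟨hstep.1.comp_tendsto hφ, hstep.2.comp_tendsto hφ⟩
      (isTheta_log ih (tendsto_iterLog_atTop n))

theorem isTheta_phiIter_two_mul (hβ : 0 < β) (n : ℕ) :
    (fun x ↦ phiIter β n (2 * x)) =Θ[atTop] phiIter β n := by
  have htwo : Tendsto (fun x : ℝ ↦ 2 * x) atTop atTop := tendsto_id.const_mul_atTop two_pos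
  have hφ := isTheta_phiIter_iterLog hβ n
  have hlog := isTheta_iterLog_comp (l := atTop) (f := fun x : ℝ ↦ 2 * x) (g := id)
    ((isTheta_const_mul_left two_ne_zero).2 isTheta_rfl) tendsto_id n
  exact IsTheta.trans ⟨hφ.1.comp_tendsto htwo, hφ.2.comp_tendsto htwo⟩ (hlog.trans hφ.symm)

theorem isTheta_phiIter_succ_sub (hβ : 0 < β) (n : ℕ) :
    (fun x ↦ phiIter β (n + 1) (2 * x) - phiIter β (n + 1) x) =Θ[atTop]
      fun x ↦ (phiIter β n (2 * x) - phiIter β n x) / phiIter β n x := by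
  have hincr (m : ℕ) : ∀ᶠ x in atTop, phiIter β m x ≤ phiIter β m (2 * x) := by
    filter_upwards [eventually_gt_atTop 0] with x hx
    exact monotoneOn_phiIter hβ.le m hx (mul_pos two_pos hx) (by linarith)
  have hlarge := (tendsto_phiIter_atTop hβ n).eventually_ge_atTop 1
  obtain ⟨K, hK, hdouble⟩ := (isTheta_phiIter_two_mul hβ n).1.exists_pos
  rw [isTheta_iff_exists_mul_le ((hincr (n + 1)).mono fun x hx ↦ sub_nonneg.2 hx)
    (by filter_upwards [hincr n, hlarge] with x hx h1 using
      div_nonneg (sub_nonneg.2 hx) (by linarith))]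
  refine ⟨β / 2 / 2 / K, β / 2, by positivity, by positivity, ?_⟩
  filter_upwards [hincr n, hlarge, hdouble.bound] with x hx h1 hKx
  rw [Real.norm_of_nonneg (by linarith), Real.norm_of_nonneg (by linarith)] at hKx
  refine ⟨?_, log_one_add_rpow_sub_le (half_pos hβ) (by linarith) hx⟩
  have hpos : 0 < phiIter β n (2 * x) := by linarith
  refine le_trans ?_ (le_log_one_add_rpow_sub (half_pos hβ) h1 hx)
  calc β / 2 / 2 / K * ((phiIter β n (2 * x) - phiIter β n x) / phiIter β n x)
      = β / 2 / 2 * ((phiIter β n (2 * x) - phiIter β n x) / (K * phiIter β n x)) := by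
        field_simp
    _ ≤ _ := by
        have := sub_nonneg.2 hx
        gcongr

theorem isTheta_phiIter_two_mul_sub (hβ : 0 < β) (n : ℕ) :
    (fun x ↦ phiIter β (n + 1) (2 * x) - phiIter β (n + 1) x) =Θ[atTop]
      fun x ↦ (iterLogProd n x)⁻¹ := by
  induction n with
  | zero =>
    refine (isTheta_phiIter_succ_sub hβ 0).trans (EventuallyEq.isTheta ?_)
    filter_upwards [eventually_gt_atTop 0] with x hx
    simp only [phiIter, iterLogProd_zero]
    field_simp
    norm_num
  | succ n ih =>
    simp only [iterLogProd_succ, mul_inv]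
    exact (isTheta_phiIter_succ_sub hβ (n + 1)).trans
      (ih.div (isTheta_phiIter_iterLog hβ (n + 1)))

end phiIter

/-! ### Monotone Lévy densities -/

theorem mul_measureReal_le_setIntegral {α : Type*} [MeasurableSpace α] {ν : Measure α}
    {s u : Set α} {f : α → ℝ} {c : ℝ} (hs : MeasurableSet s) (hu : MeasurableSet u) (hsu : s ⊆ u)
    (hνs : ν s ≠ ⊤) (hf : IntegrableOn f u ν) (hf0 : ∀ x ∈ u, 0 ≤ f x) (hc : ∀ x ∈ s, c ≤ f x) :
    c * ν.real s ≤ ∫ x in u, f x ∂ν :=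
  (setIntegral_ge_of_const_le_real hs hνs hc (hf.mono_set hsu)).trans <|
    setIntegral_mono_set hf (ae_restrict_of_forall_mem hu hf0) hsu.eventuallyLE

theorem exp_mul_one_sub_exp_mul (x y : ℝ) :
    Real.exp (-x) * (1 - Real.exp (-x)) * y =
      (1 - Real.exp (-(2 * x))) * y - (1 - Real.exp (-x)) * y := by
  have hsq : Real.exp (-(2 * x)) = Real.exp (-x) ^ 2 := by
    rw [← Real.exp_nat_mul]; push_cast; ring_nf
  rw [hsq]
  ring

/-- `μ` is a nonincreasing Lévy density of the driftless Laplace exponent `φ`. Integrability is a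
separate field because the Bochner integral of a nonintegrable function is `0`. -/
structure HasAntitoneLevyDensity (φ μ : ℝ → ℝ) : Prop where
  antitoneOn : AntitoneOn μ (Ioi 0)
  integrableOn : ∀ l, 0 < l → IntegrableOn (fun t ↦ (1 - Real.exp (-(l * t))) * μ t) (Ioi 0)
  eq_integral : ∀ l, 0 < l → φ l = ∫ t in Ioi 0, (1 - Real.exp (-(l * t))) * μ t

namespace HasAntitoneLevyDensity

variable {φ μ : ℝ → ℝ}

theorem integrableOn_Ioi (h : HasAntitoneLevyDensity φ μ) {a : ℝ} (ha : 0 < a) :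
    IntegrableOn μ (Ioi a) := by
  have hsub : Ioi a ⊆ Ioi 0 := Ioi_subset_Ioi ha.le
  have hexp : 0 < 1 - Real.exp (-a) := by simpa using ha
  refine (((h.integrableOn 1 one_pos).mono_set hsub).norm.const_mul (1 - Real.exp (-a))⁻¹).mono'
    (aemeasurable_restrict_of_antitoneOn measurableSet_Ioi
      (h.antitoneOn.mono hsub)).aestronglyMeasurable ?_
  refine ae_restrict_of_forall_mem measurableSet_Ioi fun t (ht : a < t) ↦ ?_
  have hle : 1 - Real.exp (-a) ≤ 1 - Real.exp (-(1 * t)) := by gcongr; linarith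
  rw [le_inv_mul_iff₀ hexp, norm_mul, Real.norm_of_nonneg (hexp.le.trans hle)]
  gcongr

theorem nonneg (h : HasAntitoneLevyDensity φ μ) {t : ℝ} (ht : 0 < t) : 0 ≤ μ t := by
  by_contra! hneg
  have hconst : IntegrableOn (fun _ ↦ μ t) (Ioi t) := by
    refine Integrable.mono (h.integrableOn_Ioi ht) aestronglyMeasurable_const <|
      ae_restrict_of_forall_mem measurableSet_Ioi fun s (hs : t < s) ↦ ?_
    have hle : μ s ≤ μ t := h.antitoneOn ht (ht.trans hs) hs.le
    rw [Real.norm_of_nonpos hneg.le, Real.norm_of_nonpos (hle.trans hneg.le)]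
    exact neg_le_neg hle
  simp [integrableOn_const_iff, hneg.ne] at hconst

theorem integrableOn_exp_mul_one_sub_exp (h : HasAntitoneLevyDensity φ μ) {l : ℝ} (hl : 0 < l) :
    IntegrableOn (fun t ↦ Real.exp (-(l * t)) * (1 - Real.exp (-(l * t))) * μ t) (Ioi 0) := by
  simp only [exp_mul_one_sub_exp_mul, ← mul_assoc]
  exact (h.integrableOn (2 * l) (by positivity)).sub (h.integrableOn l hl)

theorem two_mul_sub_eq_integral (h : HasAntitoneLevyDensity φ μ) {l : ℝ} (hl : 0 < l) :
    φ (2 * l) - φ l =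
      ∫ t in Ioi 0, Real.exp (-(l * t)) * (1 - Real.exp (-(l * t))) * μ t := by
  have h2l : 0 < 2 * l := by positivity
  simp only [exp_mul_one_sub_exp_mul, ← mul_assoc]
  rw [integral_sub (h.integrableOn _ h2l) (h.integrableOn l hl), ← h.eq_integral _ h2l,
    ← h.eq_integral l hl]

theorem two_mul_sub_nonneg (h : HasAntitoneLevyDensity φ μ) {l : ℝ} (hl : 0 < l) :
    0 ≤ φ (2 * l) - φ l := by
  rw [h.two_mul_sub_eq_integral hl]
  refine setIntegral_nonneg measurableSet_Ioi fun t (ht : 0 < t) ↦ ?_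
  have hexp : 0 ≤ 1 - Real.exp (-(l * t)) := by simpa using mul_nonneg hl.le ht.le
  exact mul_nonneg (mul_nonneg (Real.exp_pos _).le hexp) (h.nonneg ht)

theorem mul_le_two_mul_sub (h : HasAntitoneLevyDensity φ μ) {t : ℝ} (ht : 0 < t) :
    Real.exp (-1) * (1 - Real.exp (-(1 / 2))) / 2 * (t * μ t) ≤ φ (2 * t⁻¹) - φ t⁻¹ := by
  have ht' : 0 < t⁻¹ := inv_pos.2 ht
  have hexp (s : ℝ) (hs : 0 < s) : 0 ≤ 1 - Real.exp (-(t⁻¹ * s)) := by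
    simpa using mul_nonneg ht'.le hs.le
  have hlower : ∀ s ∈ Ioc (t / 2) t, Real.exp (-1) * (1 - Real.exp (-(1 / 2))) * μ t ≤
      Real.exp (-(t⁻¹ * s)) * (1 - Real.exp (-(t⁻¹ * s))) * μ s := by
    rintro s ⟨hts, hst⟩
    have hs : 0 < s := (half_pos ht).trans hts
    have hhalf : 1 / 2 ≤ t⁻¹ * s := by rw [le_inv_mul_iff₀ ht]; linarith
    have hone : t⁻¹ * s ≤ 1 := by rwa [inv_mul_le_iff₀ ht, mul_one]
    have := h.nonneg ht
    have := hexp s hs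
    have := h.antitoneOn hs ht hst
    have : 0 ≤ 1 - Real.exp (-(1 / 2)) := by simp
    gcongr
  have hmain := mul_measureReal_le_setIntegral measurableSet_Ioc measurableSet_Ioi
    (fun s hs ↦ (half_pos ht).trans hs.1) (by simp) (h.integrableOn_exp_mul_one_sub_exp ht')
    (fun s hs ↦ mul_nonneg (mul_nonneg (Real.exp_pos _).le (hexp s hs)) (h.nonneg hs)) hlower
  rw [h.two_mul_sub_eq_integral ht']
  rw [Real.volume_real_Ioc_of_le (by linarith), sub_half] at hmain
  linarith

theorem setIntegral_Ioc_le (h : HasAntitoneLevyDensity φ μ) {l a M : ℝ} (hl : 0 < l) (ha : 0 ≤ a)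
    (hM : ∀ t ∈ Ioc 0 a, t * μ t ≤ M) :
    ∫ t in Ioc 0 a, Real.exp (-(l * t)) * (1 - Real.exp (-(l * t))) * μ t ≤ l * (a * M) := by
  calc _ ≤ ∫ _ in Ioc 0 a, l * M := by
        refine setIntegral_mono_on
          ((h.integrableOn_exp_mul_one_sub_exp hl).mono_set Ioc_subset_Ioi_self)
          (integrableOn_const (by simp)) measurableSet_Ioc fun t ht ↦ ?_
        have hsub : 1 - Real.exp (-(l * t)) ≤ l * t := by
          linarith [Real.add_one_le_exp (-(l * t))]
        have hexp : Real.exp (-(l * t)) ≤ 1 := by simpa using mul_nonneg hl.le ht.1.le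
        have hμt := h.nonneg ht.1
        calc Real.exp (-(l * t)) * (1 - Real.exp (-(l * t))) * μ t ≤ 1 * (l * t) * μ t := by gcongr
          _ = l * (t * μ t) := by ring
          _ ≤ l * M := by gcongr; exact hM t ht
    _ = l * (a * M) := by simp [ha]; ring

theorem setIntegral_Ioi_le (h : HasAntitoneLevyDensity φ μ) {l a : ℝ} (hl : 0 < l) (ha : 0 < a) :
    ∫ t in Ioi a, Real.exp (-(l * t)) * (1 - Real.exp (-(l * t))) * μ t ≤ μ a / l := by
  calc _ ≤ ∫ t in Ioi a, Real.exp (-l * t) * μ a := by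
        refine setIntegral_mono_on
          ((h.integrableOn_exp_mul_one_sub_exp hl).mono_set (Ioi_subset_Ioi ha.le))
          ((integrableOn_exp_mul_Ioi (neg_neg_of_pos hl) a).mul_const _) measurableSet_Ioi
          fun t (hat : a < t) ↦ ?_
        have ht := ha.trans hat
        have hexp := Real.exp_pos (-(l * t))
        rw [neg_mul]
        gcongr
        · exact h.nonneg ht
        · exact mul_le_of_le_one_right hexp.le (by linarith)
        · exact h.antitoneOn ha ht hat.le
    _ = Real.exp (-(l * a)) * (μ a / l) := by
        rw [integral_mul_const, integral_exp_mul_Ioi (neg_neg_of_pos hl), neg_div_neg_eq, neg_mul]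
        ring
    _ ≤ μ a / l :=
        mul_le_of_le_one_left (div_nonneg (h.nonneg ha) hl.le)
          (by simpa using mul_nonneg hl.le ha.le)

theorem two_mul_sub_le (h : HasAntitoneLevyDensity φ μ) {l a M : ℝ} (hl : 0 < l) (ha : 0 < a)
    (hM : ∀ t ∈ Ioc 0 a, t * μ t ≤ M) : φ (2 * l) - φ l ≤ l * (a * M) + μ a / l := by
  have hint := h.integrableOn_exp_mul_one_sub_exp hl
  rw [h.two_mul_sub_eq_integral hl, ← Ioc_union_Ioi_eq_Ioi ha.le,
    setIntegral_union (Ioc_disjoint_Ioi le_rfl) measurableSet_Ioi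
      (hint.mono_set Ioc_subset_Ioi_self) (hint.mono_set (Ioi_subset_Ioi ha.le))]
  exact add_le_add (h.setIntegral_Ioc_le hl ha.le hM) (h.setIntegral_Ioi_le hl ha)

theorem isBigO_of_sub (h : HasAntitoneLevyDensity φ μ) {g : ℝ → ℝ}
    (hφ : (fun l ↦ φ (2 * l) - φ l) =O[atTop] g) :
    (fun t ↦ t * μ t) =O[𝓝[>] 0] fun t ↦ g t⁻¹ := by
  refine .trans (.of_bound (Real.exp (-1) * (1 - Real.exp (-(1 / 2))) / 2)⁻¹ ?_)
    (hφ.comp_tendsto tendsto_inv_nhdsGT_zero)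
  have hκ : 0 < 1 - Real.exp (-(1 / 2)) := by simp
  filter_upwards [self_mem_nhdsWithin] with t (ht : 0 < t)
  rw [Real.norm_of_nonneg (mul_nonneg ht.le (h.nonneg ht)), le_inv_mul_iff₀ (by positivity)]
  exact (h.mul_le_two_mul_sub ht).trans (Real.le_norm_self _)

theorem inv_le_mul_of_le_sub (h : HasAntitoneLevyDensity φ μ) {P : ℝ → ℝ} {t ε A C : ℝ}
    (ht : 0 < t) (hε : 0 < ε) (hε1 : ε ≤ 1) (hA : 0 ≤ A) (hC : 0 ≤ C) (hεA : C * (ε * A) ≤ 1 / 2)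
    (hP : ∀ x, ε * t⁻¹ ≤ x → 0 < P x) (hmono : MonotoneOn P (Ici (ε * t⁻¹)))
    (hφ : (P (ε * t⁻¹))⁻¹ ≤ C * (φ (2 * (ε * t⁻¹)) - φ (ε * t⁻¹)))
    (hμ : ∀ s ∈ Ioc 0 t, s * μ s ≤ A * (P s⁻¹)⁻¹) :
    (P t⁻¹)⁻¹ ≤ 2 * C / ε * (t * μ t) := by
  have hinv (x : ℝ) (hx : ε * t⁻¹ ≤ x) : (P x)⁻¹ ≤ (P (ε * t⁻¹))⁻¹ :=
    inv_anti₀ (hP _ le_rfl) (hmono self_mem_Ici hx hx)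
  have hle (s : ℝ) (hs : s ∈ Ioc 0 t) : ε * t⁻¹ ≤ s⁻¹ :=
    (mul_le_of_le_one_left (by positivity) hε1).trans (inv_anti₀ hs.1 hs.2)
  have hnear : ∀ s ∈ Ioc 0 t, s * μ s ≤ A * (P (ε * t⁻¹))⁻¹ := fun s hs ↦
    (hμ s hs).trans (mul_le_mul_of_nonneg_left (hinv _ (hle s hs)) hA)
  have hhalf : (P (ε * t⁻¹))⁻¹ ≤ 1 / 2 * (P (ε * t⁻¹))⁻¹ + C / ε * (t * μ t) :=
    calc (P (ε * t⁻¹))⁻¹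
        ≤ C * (ε * t⁻¹ * (t * (A * (P (ε * t⁻¹))⁻¹)) + μ t / (ε * t⁻¹)) :=
          hφ.trans (by gcongr; exact h.two_mul_sub_le (by positivity) ht hnear)
      _ = C * (ε * A) * (P (ε * t⁻¹))⁻¹ + C / ε * (t * μ t) := by field_simp
      _ ≤ _ := by
          have := hP _ le_rfl
          gcongr
  rw [mul_div_assoc, mul_assoc]
  linarith [hinv _ (hle t ⟨ht, le_rfl⟩)]

theorem isBigO_inv_of_sub (h : HasAntitoneLevyDensity φ μ) {P : ℝ → ℝ}
    (hP : ∀ᶠ x in atTop, 0 < P x) (hmono : ∀ᶠ B in atTop, MonotoneOn P (Ici B))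
    (hφ : (fun l ↦ (P l)⁻¹) =O[atTop] fun l ↦ φ (2 * l) - φ l)
    (hμ : (fun t ↦ t * μ t) =O[𝓝[>] 0] fun t ↦ (P t⁻¹)⁻¹) :
    (fun t ↦ (P t⁻¹)⁻¹) =O[𝓝[>] 0] fun t ↦ t * μ t := by
  obtain ⟨C, hC, hφC⟩ := hφ.exists_pos
  obtain ⟨A, hA, hμA⟩ := hμ.exists_pos
  obtain ⟨u, hu, hμu⟩ := mem_nhdsGT_iff_exists_Ioc_subset.1 <| hμA.bound.and <|
    tendsto_inv_nhdsGT_zero.eventually hP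
  -- With this `ε`, at most half of the increment of `φ` at `l = ε / t` comes from `(0, t]`.
  obtain ⟨ε, hε, hε1, hεA⟩ : ∃ ε > 0, ε ≤ 1 ∧ C * (ε * A) ≤ 1 / 2 :=
    ⟨min 1 (1 / (2 * C * A)), by positivity, min_le_left _ _, by
      calc C * (min 1 (1 / (2 * C * A)) * A) ≤ C * (1 / (2 * C * A) * A) := by
            gcongr; exact min_le_right _ _
        _ = 1 / 2 := by field_simp⟩
  have hscale : Tendsto (fun t ↦ ε * t⁻¹) (𝓝[>] 0) atTop :=
    tendsto_inv_nhdsGT_zero.const_mul_atTop hε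
  refine .of_bound (2 * C / ε) ?_
  filter_upwards [hscale.eventually (eventually_forall_ge_atTop.2 hP), hscale.eventually hmono,
    hscale.eventually hφC.bound, Ioc_mem_nhdsGT hu] with t hpos hmono hbound ht
  have hnonneg (s : ℝ) (hs : 0 < s) : 0 ≤ s * μ s := mul_nonneg hs.le (h.nonneg hs)
  have hl : 0 < ε * t⁻¹ := mul_pos hε (inv_pos.2 ht.1)
  rw [Real.norm_of_nonneg (inv_pos.2 (hpos _ le_rfl)).le,
    Real.norm_of_nonneg (h.two_mul_sub_nonneg hl)] at hbound
  rw [Real.norm_of_nonneg (inv_pos.2 (hμu ht).2).le, Real.norm_of_nonneg (hnonneg t ht.1)]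
  refine h.inv_le_mul_of_le_sub ht.1 hε hε1 hA.le hC.le hεA hpos hmono hbound fun s hs ↦ ?_
  obtain ⟨hμs, hPs⟩ := hμu ⟨hs.1, hs.2.trans ht.2⟩
  rwa [Real.norm_of_nonneg (hnonneg s hs.1), Real.norm_of_nonneg (inv_pos.2 hPs).le] at hμs

theorem isTheta_of_sub (h : HasAntitoneLevyDensity φ μ) {P : ℝ → ℝ}
    (hP : ∀ᶠ x in atTop, 0 < P x) (hmono : ∀ᶠ B in atTop, MonotoneOn P (Ici B))
    (hφ : (fun l ↦ φ (2 * l) - φ l) =Θ[atTop] fun l ↦ (P l)⁻¹) :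
    (fun t ↦ t * μ t) =Θ[𝓝[>] 0] fun t ↦ (P t⁻¹)⁻¹ :=
  have hμ := h.isBigO_of_sub hφ.1
  ⟨hμ, h.isBigO_inv_of_sub hP hmono hφ.2 hμ⟩

end HasAntitoneLevyDensity

/-! ### Gaussian integrals -/

theorem tendsto_inv_sq_nhdsGT_zero : Tendsto (fun r : ℝ ↦ (r ^ 2)⁻¹) (𝓝[>] 0) atTop := by
  simpa only [inv_pow, Function.comp_def] using
    (tendsto_pow_atTop (α := ℝ) two_ne_zero).comp tendsto_inv_nhdsGT_zero

theorem integrableOn_rpow_mul_exp_neg_div {q c : ℝ} (hq : 0 < q) (hc : 0 < c) :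
    IntegrableOn (fun t ↦ t ^ (-q - 1) * Real.exp (-(c / t))) (Ioi 0) := by
  have hgamma : IntegrableOn (fun x : ℝ ↦ x ^ (q - 1) * Real.exp (-c * x ^ (1 : ℝ))) (Ioi 0) :=
    integrableOn_rpow_mul_exp_neg_mul_rpow (by linarith) one_pos hc
  refine ((integrableOn_Ioi_comp_rpow_iff' _ (neg_ne_zero.2 one_ne_zero)).2 hgamma).congr_fun
    (fun t (ht : 0 < t) ↦ ?_) measurableSet_Ioi
  simp only [smul_eq_mul]
  rw [Real.rpow_one, ← Real.rpow_mul ht.le, ← mul_assoc, ← Real.rpow_add ht,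
    Real.rpow_neg_one, neg_mul, div_eq_mul_inv]
  ring_nf

theorem integrableOn_and_setIntegral_le {α : Type*} [MeasurableSpace α] {ν : Measure α} {s : Set α}
    {f g : α → ℝ} (hs : MeasurableSet s) (hf : AEStronglyMeasurable f (ν.restrict s))
    (hg : IntegrableOn g s ν) (hf0 : ∀ x ∈ s, 0 ≤ f x) (hfg : ∀ x ∈ s, f x ≤ g x) :
    IntegrableOn f s ν ∧ ∫ x in s, f x ∂ν ≤ ∫ x in s, g x ∂ν := by
  have hint : IntegrableOn f s ν := Integrable.mono' hg hf <| ae_restrict_of_forall_mem hs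
    fun x hx ↦ (Real.norm_of_nonneg (hf0 x hx)).trans_le (hfg x hx)
  exact ⟨hint, setIntegral_mono_on hint hg hs hfg⟩

/-- The Gauss–Weierstrass kernel at time `t` and distance `r` from the origin, in dimension `d`.
Only its radial profile is needed, so that `d` may be any real number. -/
noncomputable def heatKernel (d r t : ℝ) : ℝ :=
  (4 * Real.pi * t) ^ (-d / 2) * Real.exp (-(r ^ 2 / (4 * t)))

section heatKernel

variable {d r : ℝ}

theorem heatKernel_nonneg {t : ℝ} (ht : 0 ≤ t) : 0 ≤ heatKernel d r t := by
  unfold heatKernel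
  positivity

theorem measurable_heatKernel : Measurable (heatKernel d r) := by
  unfold heatKernel
  fun_prop

theorem heatKernel_sq_mul (hr : 0 < r) {s : ℝ} (hs : 0 ≤ s) :
    heatKernel d r (r ^ 2 * s) = r ^ (-d) * heatKernel d 1 s := by
  have hpow : (r ^ 2) ^ (-d / 2) = r ^ (-d) := by
    rw [← Real.rpow_natCast_mul hr.le]; congr 1; push_cast; ring
  rw [heatKernel, heatKernel, mul_left_comm, Real.mul_rpow (by positivity) (by positivity), hpow,
    mul_assoc]
  congr 4
  field_simp

theorem heatKernel_le (hd : 0 ≤ d) {a t : ℝ} (ha : 0 < a) (hat : a ≤ t) :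
    heatKernel d r t ≤ (4 * Real.pi * a) ^ (-d / 2) := by
  have ht : 0 < t := ha.trans_le hat
  have hexp : Real.exp (-(r ^ 2 / (4 * t))) ≤ 1 :=
    Real.exp_le_one_iff.2 (neg_nonpos.2 (by positivity))
  exact (mul_le_of_le_one_right (by positivity) hexp).trans <|
    Real.rpow_le_rpow_of_nonpos (by positivity) (by gcongr) (by linarith)

theorem le_heatKernel (hd : 0 ≤ d) (hr : 0 < r) {t : ℝ} (ht : t ∈ Ioc (r ^ 2) (2 * r ^ 2)) :
    r ^ (-d) * ((4 * Real.pi * 2) ^ (-d / 2) * Real.exp (-(1 / 4))) ≤ heatKernel d r t := by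
  obtain ⟨s, rfl⟩ : ∃ s, t = r ^ 2 * s := ⟨t / r ^ 2, by field_simp⟩
  have hr2 : 0 < r ^ 2 := by positivity
  have hs1 : 1 < s := by simpa [hr2] using ht.1
  have hs2 : s ≤ 2 := by have := ht.2; rw [mul_comm] at this; exact le_of_mul_le_mul_right this hr2
  rw [heatKernel_sq_mul hr (by linarith), heatKernel]
  refine mul_le_mul_of_nonneg_left (mul_le_mul ?_ ?_ ?_ ?_) ?_ <;> try positivity
  · exact Real.rpow_le_rpow_of_nonpos (by positivity) (by gcongr) (by linarith)
  · rw [Real.exp_le_exp, neg_le_neg_iff, one_pow]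
    gcongr
    linarith

theorem integrableOn_heatKernel_one_mul {δ : ℝ} (hδ : δ < d / 2) :
    IntegrableOn (fun t ↦ heatKernel d 1 t * (t⁻¹ * t ^ δ)) (Ioi 0) := by
  have hgamma := (integrableOn_rpow_mul_exp_neg_div (sub_pos.2 hδ) (c := 1 / 4)
    (by norm_num)).const_mul ((4 * Real.pi) ^ (-d / 2))
  refine IntegrableOn.congr_fun hgamma (fun t (ht : 0 < t) ↦ ?_) measurableSet_Ioi
  have hpow : t ^ (-(d / 2 - δ) - 1) = t ^ (-d / 2) * (t⁻¹ * t ^ δ) := by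
    rw [← Real.rpow_neg_one, ← Real.rpow_add ht, ← Real.rpow_add ht]; ring_nf
  rw [hpow, heatKernel, Real.mul_rpow (by positivity) ht.le, one_pow, div_div]
  ring

theorem heatKernel_mul_inv_mul_comp_div (hr : 0 < r) (w : ℝ → ℝ) {s : ℝ} (hs : 0 < s) :
    heatKernel d r (r ^ 2 * s) * ((r ^ 2 * s)⁻¹ * w (r ^ 2 * s / r ^ 2)) =
      r ^ (-d) * (r ^ 2)⁻¹ * (heatKernel d 1 s * (s⁻¹ * w s)) := by
  rw [heatKernel_sq_mul hr hs.le, mul_div_cancel_left₀ _ (by positivity)]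
  field_simp

theorem integrableOn_heatKernel_mul_inv_mul_comp_div (hr : 0 < r) {w : ℝ → ℝ}
    (hw : IntegrableOn (fun t ↦ heatKernel d 1 t * (t⁻¹ * w t)) (Ioi 0)) :
    IntegrableOn (fun t ↦ heatKernel d r t * (t⁻¹ * w (t / r ^ 2))) (Ioi 0) := by
  have hr2 : 0 < r ^ 2 := by positivity
  rw [← mul_zero (r ^ 2), ← integrableOn_Ioi_comp_mul_left_iff _ _ hr2]
  exact IntegrableOn.congr_fun (hw.const_mul (r ^ (-d) * (r ^ 2)⁻¹))
    (fun s hs ↦ (heatKernel_mul_inv_mul_comp_div hr w hs).symm) measurableSet_Ioi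

theorem integral_heatKernel_mul_inv_mul_comp_div (hr : 0 < r) (w : ℝ → ℝ) :
    ∫ t in Ioi 0, heatKernel d r t * (t⁻¹ * w (t / r ^ 2)) =
      r ^ (-d) * ∫ t in Ioi 0, heatKernel d 1 t * (t⁻¹ * w t) := by
  have hr2 : 0 < r ^ 2 := by positivity
  have hsubst := integral_comp_mul_left_Ioi
    (fun t ↦ heatKernel d r t * (t⁻¹ * w (t / r ^ 2))) 0 hr2
  rw [mul_zero, smul_eq_mul, eq_inv_mul_iff_mul_eq₀ hr2.ne'] at hsubst
  rw [← hsubst, setIntegral_congr_fun measurableSet_Ioi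
    fun s hs ↦ heatKernel_mul_inv_mul_comp_div hr w hs, integral_const_mul]
  field_simp

end heatKernel

section GaussianIntegral

variable {d δ : ℝ} {μ P : ℝ → ℝ}

theorem aestronglyMeasurable_of_integrableOn_Ioi (hμ : ∀ a, 0 < a → IntegrableOn μ (Ioi a)) :
    AEStronglyMeasurable μ (volume.restrict (Ioi 0)) := by
  refine LocallyIntegrableOn.aestronglyMeasurable fun x (hx : 0 < x) ↦ ?_
  exact ⟨Ioi (x / 2), mem_nhdsWithin_of_mem_nhds (Ioi_mem_nhds (half_lt_self hx)),
    hμ _ (half_pos hx)⟩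

theorem setIntegral_Ioc_heatKernel_mul_le {w : ℝ → ℝ} {a K r : ℝ} (hr : 0 < r) (hK : 0 ≤ K)
    (hw : IntegrableOn (fun t ↦ heatKernel d 1 t * (t⁻¹ * w t)) (Ioi 0))
    (hw0 : ∀ t, 0 < t → 0 ≤ w t) (hμ : AEStronglyMeasurable μ (volume.restrict (Ioi 0)))
    (hμ0 : ∀ t, 0 < t → 0 ≤ μ t) (hμK : ∀ t ∈ Ioc 0 a, μ t ≤ K * (t⁻¹ * w (t / r ^ 2))) :
    IntegrableOn (fun t ↦ heatKernel d r t * μ t) (Ioc 0 a) ∧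
      ∫ t in Ioc 0 a, heatKernel d r t * μ t ≤
        K * (r ^ (-d) * ∫ t in Ioi 0, heatKernel d 1 t * (t⁻¹ * w t)) := by
  have hdom := (integrableOn_heatKernel_mul_inv_mul_comp_div hr hw).const_mul K
  have hmeas : AEStronglyMeasurable (fun t ↦ heatKernel d r t * μ t) (volume.restrict (Ioc 0 a)) :=
    measurable_heatKernel.aestronglyMeasurable.mul
      (hμ.mono_measure (Measure.restrict_mono_set _ Ioc_subset_Ioi_self))
  obtain ⟨hint, hle⟩ := integrableOn_and_setIntegral_le measurableSet_Ioc hmeas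
    (IntegrableOn.mono_set hdom Ioc_subset_Ioi_self)
    (fun t ht ↦ mul_nonneg (heatKernel_nonneg ht.1.le) (hμ0 t ht.1)) fun t ht ↦
      (mul_le_mul_of_nonneg_left (hμK t ht) (heatKernel_nonneg ht.1.le)).trans_eq
        (mul_left_comm _ _ _)
  refine ⟨hint, hle.trans ?_⟩
  rw [← integral_heatKernel_mul_inv_mul_comp_div hr, ← integral_const_mul]
  refine setIntegral_mono_set hdom (ae_restrict_of_forall_mem measurableSet_Ioi fun t ht ↦ ?_)
    Ioc_subset_Ioi_self.eventuallyLE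
  have ht0 : 0 < t := ht
  exact mul_nonneg hK <| mul_nonneg (heatKernel_nonneg ht0.le) <|
    mul_nonneg (inv_nonneg.2 ht0.le) (hw0 _ (by positivity))

theorem setIntegral_Ioi_heatKernel_mul_le {a r : ℝ} (hd : 0 ≤ d) (ha : 0 < a)
    (hμ : IntegrableOn μ (Ioi a)) (hμ0 : ∀ t, a < t → 0 ≤ μ t) :
    IntegrableOn (fun t ↦ heatKernel d r t * μ t) (Ioi a) ∧
      ∫ t in Ioi a, heatKernel d r t * μ t ≤
        (4 * Real.pi * a) ^ (-d / 2) * ∫ t in Ioi a, μ t := by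
  rw [← integral_const_mul]
  exact integrableOn_and_setIntegral_le measurableSet_Ioi
    (measurable_heatKernel.aestronglyMeasurable.mul hμ.aestronglyMeasurable) (hμ.const_mul _)
    (fun t ht ↦ mul_nonneg (heatKernel_nonneg (ha.trans ht).le) (hμ0 t ht))
    fun t ht ↦ mul_le_mul_of_nonneg_right (heatKernel_le hd ha (le_of_lt ht)) (hμ0 t ht)

theorem exists_le_mul_one_add_rpow (hP : ∀ᶠ x in atTop, 0 < P x)
    (hmono : ∀ᶠ B in atTop, MonotoneOn P (Ici B)) (hδ : PotterBound δ P)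
    (hμ0 : ∀ t, 0 < t → 0 ≤ μ t)
    (hμO : (fun t ↦ t * μ t) =O[𝓝[>] 0] fun t ↦ (P t⁻¹)⁻¹) :
    ∃ A > 0, ∃ a > 0, ∀ᶠ r in 𝓝[>] 0, ∀ t ∈ Ioc 0 a,
      μ t ≤ A * (P (r ^ 2)⁻¹)⁻¹ * (t⁻¹ * (1 + (t / r ^ 2) ^ δ)) := by
  obtain ⟨A, hA, hμA⟩ := hμO.exists_pos
  obtain ⟨B, hB, hPB⟩ :=
    ((hδ.le_one_add_mul (hP.mono fun _ ↦ le_of_lt) hmono).and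
      (eventually_forall_ge_atTop.2 hP)).exists
  obtain ⟨a, ha, hsub⟩ := mem_nhdsGT_iff_exists_Ioc_subset.1 <| hμA.bound.and <|
    tendsto_inv_nhdsGT_zero.eventually_ge_atTop B
  refine ⟨A, hA, a, ha, ?_⟩
  filter_upwards [tendsto_inv_sq_nhdsGT_zero.eventually_ge_atTop B] with r hrB t ht
  obtain ⟨hμt, htB⟩ := hsub ht
  have hPt := hPB _ htB
  have hPr := hPB _ hrB
  rw [Real.norm_of_nonneg (mul_nonneg ht.1.le (hμ0 t ht.1)),
    Real.norm_of_nonneg (inv_pos.2 hPt).le] at hμt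
  have hpotter := hB _ _ hrB htB
  rw [inv_div_inv] at hpotter
  calc μ t = t⁻¹ * (t * μ t) := (inv_mul_cancel_left₀ ht.1.ne' _).symm
    _ ≤ t⁻¹ * (A * ((1 + (t / r ^ 2) ^ δ) * (P (r ^ 2)⁻¹)⁻¹)) := by
      have := ht.1
      refine mul_le_mul_of_nonneg_left (hμt.trans ?_) (by positivity)
      gcongr
      rwa [← div_eq_mul_inv, le_div_iff₀ hPr, inv_mul_le_iff₀' hPt]
    _ = A * (P (r ^ 2)⁻¹)⁻¹ * (t⁻¹ * (1 + (t / r ^ 2) ^ δ)) := by ring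

theorem isBigO_one_rpow_neg_mul_inv (hP : ∀ᶠ x in atTop, 0 < P x) (hδ : PotterBound δ P)
    (hδd : δ ≤ d / 2) :
    (fun _ ↦ (1 : ℝ)) =O[𝓝[>] 0] fun r ↦ r ^ (-d) * (P (r ^ 2)⁻¹)⁻¹ := by
  have hgrowth : P =O[atTop] fun x ↦ x ^ (d / 2) :=
    (hδ.isBigO_rpow (hP.mono fun _ ↦ le_of_lt)).trans <| .of_bound 1 <| by
      filter_upwards [eventually_ge_atTop 1] with x hx
      rw [one_mul, Real.norm_of_nonneg (by positivity), Real.norm_of_nonneg (by positivity)]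
      exact Real.rpow_le_rpow_of_exponent_le hx hδd
  refine ((hgrowth.comp_tendsto tendsto_inv_sq_nhdsGT_zero).mul
    (isBigO_refl (fun r ↦ (P (r ^ 2)⁻¹)⁻¹) _)).congr' ?_ ?_
  · filter_upwards [tendsto_inv_sq_nhdsGT_zero.eventually hP] with r hr using
      mul_inv_cancel₀ hr.ne'
  · filter_upwards [self_mem_nhdsWithin] with r (hr : 0 < r)
    have hpow : ((r ^ 2)⁻¹) ^ (d / 2) = r ^ (-d) := by
      rw [← Real.rpow_natCast, ← Real.rpow_neg hr.le, ← Real.rpow_mul hr.le]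
      congr 1; push_cast; ring
    simp only [Function.comp_apply, hpow]

theorem exists_integral_heatKernel_mul_le (hd : 0 < d) (hδd : δ < d / 2)
    (hP : ∀ᶠ x in atTop, 0 < P x) (hmono : ∀ᶠ B in atTop, MonotoneOn P (Ici B))
    (hδ : PotterBound δ P) (hμ0 : ∀ t, 0 < t → 0 ≤ μ t)
    (hμi : ∀ a, 0 < a → IntegrableOn μ (Ioi a))
    (hμO : (fun t ↦ t * μ t) =O[𝓝[>] 0] fun t ↦ (P t⁻¹)⁻¹) :
    ∃ K L : ℝ, ∀ᶠ r in 𝓝[>] 0, IntegrableOn (fun t ↦ heatKernel d r t * μ t) (Ioi 0) ∧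
      ∫ t in Ioi 0, heatKernel d r t * μ t ≤ K * (r ^ (-d) * (P (r ^ 2)⁻¹)⁻¹) + L := by
  obtain ⟨A, hA, a, ha, hμA⟩ := exists_le_mul_one_add_rpow hP hmono hδ hμ0 hμO
  have hw : IntegrableOn (fun t ↦ heatKernel d 1 t * (t⁻¹ * (1 + t ^ δ))) (Ioi 0) := by
    have hone := integrableOn_heatKernel_one_mul (half_pos hd)
    simp only [Real.rpow_zero] at hone
    simp only [mul_add]
    exact hone.add (integrableOn_heatKernel_one_mul hδd)
  refine ⟨A * ∫ t in Ioi 0, heatKernel d 1 t * (t⁻¹ * (1 + t ^ δ)),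
    (4 * Real.pi * a) ^ (-d / 2) * ∫ t in Ioi a, μ t, ?_⟩
  filter_upwards [self_mem_nhdsWithin, hμA, tendsto_inv_sq_nhdsGT_zero.eventually hP]
    with r (hr : 0 < r) hμr hPr
  obtain ⟨hint_near, hnear⟩ := setIntegral_Ioc_heatKernel_mul_le hr (by positivity) hw
    (fun t ht ↦ by positivity) (aestronglyMeasurable_of_integrableOn_Ioi hμi) hμ0 hμr
  obtain ⟨hint_far, hfar⟩ := setIntegral_Ioi_heatKernel_mul_le (r := r) hd.le ha (hμi a ha)
    fun t ht ↦ hμ0 t (ha.trans ht)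
  have hunion := setIntegral_union (Ioc_disjoint_Ioi le_rfl) measurableSet_Ioi hint_near hint_far
  have hint := hint_near.union hint_far
  rw [Ioc_union_Ioi_eq_Ioi (le_of_lt ha)] at hunion hint
  exact ⟨hint, by linarith⟩

theorem isBigO_integral_heatKernel_mul (hd : 0 < d) (hδd : δ < d / 2)
    (hP : ∀ᶠ x in atTop, 0 < P x) (hmono : ∀ᶠ B in atTop, MonotoneOn P (Ici B))
    (hδ : PotterBound δ P) (hμ0 : ∀ t, 0 < t → 0 ≤ μ t)
    (hμi : ∀ a, 0 < a → IntegrableOn μ (Ioi a))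
    (hμO : (fun t ↦ t * μ t) =O[𝓝[>] 0] fun t ↦ (P t⁻¹)⁻¹) :
    (∀ᶠ r in 𝓝[>] 0, IntegrableOn (fun t ↦ heatKernel d r t * μ t) (Ioi 0)) ∧
      (fun r ↦ ∫ t in Ioi 0, heatKernel d r t * μ t) =O[𝓝[>] 0]
        fun r ↦ r ^ (-d) * (P (r ^ 2)⁻¹)⁻¹ := by
  obtain ⟨K, L, hKL⟩ := exists_integral_heatKernel_mul_le hd hδd hP hmono hδ hμ0 hμi hμO
  refine ⟨hKL.mono fun _ h ↦ h.1, ?_⟩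
  have hconst : (fun _ ↦ L) =O[𝓝[>] 0] fun r ↦ r ^ (-d) * (P (r ^ 2)⁻¹)⁻¹ :=
    (isBigO_const_const L one_ne_zero _).trans (isBigO_one_rpow_neg_mul_inv hP hδ hδd.le)
  refine IsBigO.trans (.of_bound 1 ?_) (((isBigO_refl _ _).const_mul_left K).add hconst)
  filter_upwards [hKL] with r hr
  have hnonneg : 0 ≤ ∫ t in Ioi 0, heatKernel d r t * μ t :=
    setIntegral_nonneg measurableSet_Ioi fun t ht ↦
      mul_nonneg (heatKernel_nonneg (le_of_lt ht)) (hμ0 t ht)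
  rw [one_mul, Real.norm_of_nonneg hnonneg]
  exact hr.2.trans (Real.le_norm_self _)

theorem mul_le_integral_heatKernel_mul {r m : ℝ} (hd : 0 ≤ d) (hr : 0 < r)
    (hm : 0 ≤ m) (hμ0 : ∀ t, 0 < t → 0 ≤ μ t)
    (hint : IntegrableOn (fun t ↦ heatKernel d r t * μ t) (Ioi 0))
    (hμm : ∀ t ∈ Ioc (r ^ 2) (2 * r ^ 2), m ≤ t * μ t) :
    (4 * Real.pi * 2) ^ (-d / 2) * Real.exp (-(1 / 4)) / 2 * (r ^ (-d) * m) ≤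
      ∫ t in Ioi 0, heatKernel d r t * μ t := by
  have hr2 : 0 < r ^ 2 := by positivity
  have hlower : ∀ t ∈ Ioc (r ^ 2) (2 * r ^ 2),
      r ^ (-d) * ((4 * Real.pi * 2) ^ (-d / 2) * Real.exp (-(1 / 4))) * (m / (2 * r ^ 2)) ≤
        heatKernel d r t * μ t := fun t ht ↦ by
    have ht0 : 0 < t := hr2.trans ht.1
    refine mul_le_mul (le_heatKernel hd hr ht) ?_ (by positivity) (heatKernel_nonneg ht0.le)
    rw [div_le_iff₀' (by positivity)]
    exact (hμm t ht).trans (mul_le_mul_of_nonneg_right ht.2 (hμ0 t ht0))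
  have hmain := mul_measureReal_le_setIntegral measurableSet_Ioc measurableSet_Ioi
    (fun t ht ↦ hr2.trans ht.1) (by simp) hint
    (fun t (ht : 0 < t) ↦ mul_nonneg (heatKernel_nonneg ht.le) (hμ0 t ht)) hlower
  refine le_of_eq_of_le ?_ hmain
  rw [Real.volume_real_Ioc_of_le (by linarith)]
  field_simp
  ring

theorem isBigO_integral_heatKernel_mul_inv (hd : 0 ≤ d)
    (hP : ∀ᶠ x in atTop, 0 < P x) (hmono : ∀ᶠ B in atTop, MonotoneOn P (Ici B))
    (hμ0 : ∀ t, 0 < t → 0 ≤ μ t)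
    (hint : ∀ᶠ r in 𝓝[>] 0, IntegrableOn (fun t ↦ heatKernel d r t * μ t) (Ioi 0))
    (hμO : (fun t ↦ (P t⁻¹)⁻¹) =O[𝓝[>] 0] fun t ↦ t * μ t) :
    (fun r ↦ r ^ (-d) * (P (r ^ 2)⁻¹)⁻¹) =O[𝓝[>] 0]
      fun r ↦ ∫ t in Ioi 0, heatKernel d r t * μ t := by
  obtain ⟨C, hC, hμC⟩ := hμO.exists_pos
  obtain ⟨B, hBmono, hBpos⟩ := (hmono.and (eventually_forall_ge_atTop.2 hP)).exists
  obtain ⟨a, ha, hsub⟩ := mem_nhdsGT_iff_exists_Ioc_subset.1 <| hμC.bound.and <|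
    tendsto_inv_nhdsGT_zero.eventually_ge_atTop B
  set κ := (4 * Real.pi * 2) ^ (-d / 2) * Real.exp (-(1 / 4)) / 2 with hκ
  have hκ0 : 0 < κ := by positivity
  refine .of_bound (C / κ) ?_
  filter_upwards [self_mem_nhdsWithin, hint, tendsto_inv_sq_nhdsGT_zero.eventually_ge_atTop B,
    tendsto_inv_sq_nhdsGT_zero.eventually_ge_atTop (2 / a)] with r (hr : 0 < r) hint hrB hra
  have hPr := hBpos _ hrB
  have hr2 : 0 < r ^ 2 := by positivity
  have hra' : 2 * r ^ 2 ≤ a := by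
    rw [div_le_iff₀ ha, inv_mul_eq_div, le_div_iff₀ hr2] at hra
    exact hra
  have hlower : ∀ t ∈ Ioc (r ^ 2) (2 * r ^ 2), C⁻¹ * (P (r ^ 2)⁻¹)⁻¹ ≤ t * μ t := fun t ht ↦ by
    have ht0 : 0 < t := hr2.trans ht.1
    obtain ⟨hμt, htB⟩ := hsub ⟨ht0, ht.2.trans hra'⟩
    have hPt := hBpos _ htB
    rw [Real.norm_of_nonneg (inv_pos.2 hPt).le,
      Real.norm_of_nonneg (mul_nonneg ht0.le (hμ0 t ht0))] at hμt
    rw [inv_mul_le_iff₀ hC]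
    exact (inv_anti₀ hPt (hBmono htB hrB (inv_anti₀ hr2 ht.1.le))).trans hμt
  have hmain := mul_le_integral_heatKernel_mul hd hr (by positivity) hμ0 hint hlower
  rw [← hκ] at hmain
  rw [Real.norm_of_nonneg (by positivity)]
  calc r ^ (-d) * (P (r ^ 2)⁻¹)⁻¹
      = C / κ * (κ * (r ^ (-d) * (C⁻¹ * (P (r ^ 2)⁻¹)⁻¹))) := by field_simp
    _ ≤ _ := by gcongr; exact hmain.trans (Real.le_norm_self _)

theorem isTheta_integral_heatKernel_mul (hd : 0 < d) (hδd : δ < d / 2)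
    (hP : ∀ᶠ x in atTop, 0 < P x) (hmono : ∀ᶠ B in atTop, MonotoneOn P (Ici B))
    (hδ : PotterBound δ P) (hμ0 : ∀ t, 0 < t → 0 ≤ μ t)
    (hμi : ∀ a, 0 < a → IntegrableOn μ (Ioi a))
    (hμO : (fun t ↦ t * μ t) =Θ[𝓝[>] 0] fun t ↦ (P t⁻¹)⁻¹) :
    (fun r ↦ ∫ t in Ioi 0, heatKernel d r t * μ t) =Θ[𝓝[>] 0]
      fun r ↦ r ^ (-d) * (P (r ^ 2)⁻¹)⁻¹ :=
  have ⟨hint, hupper⟩ := isBigO_integral_heatKernel_mul hd hδd hP hmono hδ hμ0 hμi hμO.1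
  ⟨hupper, isBigO_integral_heatKernel_mul_inv hd.le hP hmono hμ0 hint hμO.2⟩

end GaussianIntegral

theorem hasAntitoneLevyDensity_phiIter {β : ℝ} {n : ℕ} {μ : ℝ → ℝ} (hμ : AntitoneOn μ (Ioi 0))
    (hφ : ∀ l, 0 < l → phiIter β n l = ∫ t in Ioi 0, (1 - Real.exp (-(l * t))) * μ t) :
    HasAntitoneLevyDensity (phiIter β n) μ where
  antitoneOn := hμ
  eq_integral := hφ
  integrableOn l hl := not_imp_comm.1 integral_undef (hφ l hl ▸ (phiIter_pos n hl).ne')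

theorem isTheta_integral_heatKernel_mul_of_phiIter {β d : ℝ} {μ : ℝ → ℝ} (hβ : 0 < β) (hd : 0 < d)
    (n : ℕ) (h : HasAntitoneLevyDensity (phiIter β (n + 1)) μ) :
    (fun r ↦ ∫ t in Ioi 0, heatKernel d r t * μ t) =Θ[𝓝[>] 0]
      fun r ↦ r ^ (-d) * (iterLogProd n r⁻¹)⁻¹ := by
  have hP := eventually_iterLogProd_pos n
  have hmono := eventually_monotoneOn_iterLogProd n
  have hμ := h.isTheta_of_sub hP hmono (isTheta_phiIter_two_mul_sub hβ n)
  have hj := isTheta_integral_heatKernel_mul hd (by linarith : d / 4 < d / 2) hP hmono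
    (potterBound_iterLogProd n (by positivity)) (fun _ ↦ h.nonneg) (fun _ ↦ h.integrableOn_Ioi) hμ
  have hsq : (fun r ↦ iterLogProd n (r ^ 2)⁻¹) =Θ[𝓝[>] 0] fun r ↦ iterLogProd n r⁻¹ := by
    obtain ⟨hle, hge⟩ := isTheta_iterLogProd_sq n
    simp only [← inv_pow]
    exact ⟨hle.comp_tendsto tendsto_inv_nhdsGT_zero, hge.comp_tendsto tendsto_inv_nhdsGT_zero⟩
  exact hj.trans (isTheta_rfl.mul hsq.inv)

theorem iterated_geometric_stable_jump_asymp_general {β : ℝ} (hβ : 0 < β) {n : ℕ} (hn : 1 ≤ n)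
    {μ : ℝ → ℝ} (hμ : AntitoneOn μ (Ioi 0))
    (hφ : ∀ l, 0 < l → phiIter β n l = ∫ t in Ioi 0, (1 - Real.exp (-(l * t))) * μ t)
    {d : ℝ} (hd : 0 < d) {j : ℝ → ℝ}
    (hj : ∀ r, 0 < r → j r = ∫ t in Ioi 0,
      (4 * Real.pi * t) ^ (-d / 2) * Real.exp (-(r ^ 2 / (4 * t))) * μ t) :
    ∃ c C r₀ : ℝ, 0 < c ∧ c ≤ C ∧ 0 < r₀ ∧ ∀ r, 0 < r → r < r₀ →
      c * (r ^ (-d) * ∏ k ∈ Finset.Icc 1 (n - 1), (iterLog k (1 / r))⁻¹) ≤ j r ∧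
      j r ≤ C * (r ^ (-d) * ∏ k ∈ Finset.Icc 1 (n - 1), (iterLog k (1 / r))⁻¹) := by
  obtain ⟨m, rfl⟩ := Nat.exists_eq_add_of_le' hn
  have hlevy := hasAntitoneLevyDensity_phiIter hμ hφ
  have hpos : ∀ᶠ r : ℝ in 𝓝[>] 0, 0 ≤ r ^ (-d) * (iterLogProd m r⁻¹)⁻¹ := by
    filter_upwards [self_mem_nhdsWithin,
      tendsto_inv_nhdsGT_zero.eventually (eventually_iterLogProd_pos m)] with r (hr : 0 < r) hPr
    positivity
  have hnonneg (r : ℝ) : 0 ≤ ∫ t in Ioi 0, heatKernel d r t * μ t :=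
    setIntegral_nonneg measurableSet_Ioi fun t ht ↦
      mul_nonneg (heatKernel_nonneg (le_of_lt ht)) (hlevy.nonneg ht)
  obtain ⟨c, C, hc, -, h⟩ := (isTheta_iff_exists_mul_le (.of_forall hnonneg) hpos).1
    (isTheta_integral_heatKernel_mul_of_phiIter hβ hd m hlevy)
  obtain ⟨r₀, hr₀, hsub⟩ := mem_nhdsGT_iff_exists_Ioo_subset.1 (hpos.and h)
  refine ⟨c, max c C, r₀, hc, le_max_left _ _, hr₀, fun r hr hrr₀ ↦ ?_⟩
  obtain ⟨hpos, hlower, hupper⟩ := hsub ⟨hr, hrr₀⟩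
  rw [hj r hr, one_div, Finset.prod_inv_distrib]
  exact ⟨hlower, hupper.trans (mul_le_mul_of_nonneg_right (le_max_right _ _) hpos)⟩

/-- The Lévy density of the iterated geometric stable process satisfies
`j_n(r) ≍ r^{-d} ∏_{k=1}^{n-1} (log_k(1/r))⁻¹` as `r → 0+`. -/
theorem iterated_geometric_stable_jump_asymp
    (β : ℝ) (hβ0 : 0 < β) (hβ2 : β ≤ 2)
    (n : ℕ) (hn : 1 ≤ n)
    (μn : ℝ → ℝ)
    (hμpos : ∀ t, 0 < t → 0 < μn t)
    (hμdec : ∀ s t, 0 < s → s ≤ t → μn t ≤ μn s)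
    (hμn : ∀ l, 0 < l →
      phiIter β n l = ∫ t in Ioi (0:ℝ), (1 - Real.exp (-(l * t))) * μn t)
    (d : ℕ) (hd : 3 ≤ d)
    (jn : ℝ → ℝ)
    (hj : ∀ r, 0 < r → jn r =
      ∫ t in Ioi (0:ℝ), (4 * Real.pi * t) ^ (-(d:ℝ) / 2) * Real.exp (-(r ^ 2 / (4 * t))) * μn t) :
    ∃ c C r₀ : ℝ, 0 < c ∧ c ≤ C ∧ 0 < r₀ ∧ ∀ r, 0 < r → r < r₀ →
      c * (r ^ (-(d:ℝ)) * ∏ k ∈ Finset.Icc 1 (n - 1), (iterLog k (1 / r))⁻¹) ≤ jn r ∧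
      jn r ≤ C * (r ^ (-(d:ℝ)) * ∏ k ∈ Finset.Icc 1 (n - 1), (iterLog k (1 / r))⁻¹) := by
  exact iterated_geometric_stable_jump_asymp_general hβ0 hn
    (fun s hs t _ hst ↦ hμdec s t hs hst) hμn (by positivity) hj
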